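/- Let P ∈ ℝ and ν ∈ ℝ. Define, for (x, y, z) ∈ ℝ³ with (x, y, z) ≠ 0 and writing r = √(x² + y²), R = √(x² + y² + z²), the cylindrical stress components σ_rr = (P/(2π)) · ( (1 − 2ν)/(R(z + R)) − 3r²z/R⁵ ), σ_θθ = (P(1 − 2ν)/(2π)) · ( z/R³ − 1/(R(z + R)) ), σ_zz = −3Pz³/(2πR⁵), σ_rz = −3Prz²/(2πR⁵), σ_rθ = 0, σ_θz = 0, and let σ : ℝ³ \ {0} → ℝ³ˣ³ be the corresponding symmetric Cartesian stress tensor obtained by the standard cylindrical-to-Cartesian tensor transformation (with e_r = (x/r, y/r, 0), e_θ = (−y/r, x/r, 0), e_z = (0, 0, 1)). Then at every point of the open half-space {(x, y, z) : z > 0} \ {0} the stress tensor satisfies the equilibrium equations div σ = 0, i.e. for each i ∈ {1, 2, 3}, ∑_j ∂σ_ij/∂x_j = 0. -/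

import Mathlib

noncomputable section

open Matrix

/-- Partial derivative in the first (x) coordinate. -/
def pdx (f : ℝ × ℝ × ℝ → ℝ) (p : ℝ × ℝ × ℝ) : ℝ :=
  deriv (fun t => f (t, p.2.1, p.2.2)) p.1

/-- Partial derivative in the second (y) coordinate. -/
def pdy (f : ℝ × ℝ × ℝ → ℝ) (p : ℝ × ℝ × ℝ) : ℝ :=
  deriv (fun t => f (p.1, t, p.2.2)) p.2.1

/-- Partial derivative in the third (z) coordinate. -/
def pdz (f : ℝ × ℝ × ℝ → ℝ) (p : ℝ × ℝ × ℝ) : ℝ :=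
  deriv (fun t => f (p.1, p.2.1, t)) p.2.2

/-- The Cartesian Boussinesq stress tensor, obtained from the cylindrical components
`σ_rr, σ_θθ, σ_zz, σ_rz` (with `σ_rθ = σ_θz = 0`) by the standard
cylindrical-to-Cartesian tensor transformation
`σ = σ_rr e_r⊗e_r + σ_θθ e_θ⊗e_θ + σ_zz e_z⊗e_z + σ_rz (e_r⊗e_z + e_z⊗e_r)`. -/
def bstress (P ν : ℝ) (p : ℝ × ℝ × ℝ) : Matrix (Fin 3) (Fin 3) ℝ :=
  let x := p.1; let y := p.2.1; let z := p.2.2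
  let r := Real.sqrt (x ^ 2 + y ^ 2)
  let R := Real.sqrt (x ^ 2 + y ^ 2 + z ^ 2)
  let σrr : ℝ := P / (2 * Real.pi) *
    ((1 - 2 * ν) / (R * (z + R)) - 3 * r ^ 2 * z / R ^ 5)
  let σθθ : ℝ := P * (1 - 2 * ν) / (2 * Real.pi) *
    (z / R ^ 3 - 1 / (R * (z + R)))
  let σzz : ℝ := -(3 * P * z ^ 3) / (2 * Real.pi * R ^ 5)
  let σrz : ℝ := -(3 * P * r * z ^ 2) / (2 * Real.pi * R ^ 5)
  let er : Fin 3 → ℝ := ![x / r, y / r, 0]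
  let eθ : Fin 3 → ℝ := ![-y / r, x / r, 0]
  let ez : Fin 3 → ℝ := ![0, 0, 1]
  σrr • vecMulVec er er + σθθ • vecMulVec eθ eθ + σzz • vecMulVec ez ez +
    σrz • (vecMulVec er ez + vecMulVec ez er)

/-!
Away from the `z`-axis the Boussinesq stress is `P / 2π` times
`-3 z R⁻⁵ (x, y, z) ⊗ (x, y, z) + (1 - 2ν) A`,
where `A` is the planar stress with Airy function `log (z + R)`, in each plane `z = const`.
Both terms are divergence-free. The divergence of `v ⊗ (x, y, z)` is `(x, y, z) · ∇v + 3 v`, which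
vanishes by Euler's identity when `v` is homogeneous of degree `-3`, and the rows of an Airy stress
are divergence-free because partial derivatives commute.
-/

open Filter Topology

variable {f g : ℝ × ℝ × ℝ → ℝ} {p : ℝ × ℝ × ℝ}

theorem pdx_eq_fderiv (hf : DifferentiableAt ℝ f p) : pdx f p = fderiv ℝ f p (1, 0, 0) := by
  have slice : HasDerivAt (fun t : ℝ => (t, p.2.1, p.2.2)) (1, 0, 0) p.1 :=
    (hasDerivAt_id _).prodMk (hasDerivAt_const _ _)
  exact (hf.hasFDerivAt.comp_hasDerivAt p.1 slice).deriv

theorem pdy_eq_fderiv (hf : DifferentiableAt ℝ f p) : pdy f p = fderiv ℝ f p (0, 1, 0) := by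
  have slice : HasDerivAt (fun t : ℝ => (p.1, t, p.2.2)) (0, 1, 0) p.2.1 :=
    (hasDerivAt_const _ _).prodMk ((hasDerivAt_id _).prodMk (hasDerivAt_const _ _))
  exact (hf.hasFDerivAt.comp_hasDerivAt p.2.1 slice).deriv

theorem pdz_eq_fderiv (hf : DifferentiableAt ℝ f p) : pdz f p = fderiv ℝ f p (0, 0, 1) := by
  have slice : HasDerivAt (fun t : ℝ => (p.1, p.2.1, t)) (0, 0, 1) p.2.2 :=
    (hasDerivAt_const _ _).prodMk ((hasDerivAt_const _ _).prodMk (hasDerivAt_id _))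
  exact (hf.hasFDerivAt.comp_hasDerivAt p.2.2 slice).deriv

theorem pdx_congr (h : f =ᶠ[𝓝 p] g) : pdx f p = pdx g p := by
  have slice : Continuous fun t : ℝ => (t, p.2.1, p.2.2) := by fun_prop
  exact EventuallyEq.deriv_eq ((slice.tendsto p.1).eventually h)

theorem pdy_congr (h : f =ᶠ[𝓝 p] g) : pdy f p = pdy g p := by
  have slice : Continuous fun t : ℝ => (p.1, t, p.2.2) := by fun_prop
  exact EventuallyEq.deriv_eq ((slice.tendsto p.2.1).eventually h)

theorem pdz_congr (h : f =ᶠ[𝓝 p] g) : pdz f p = pdz g p := by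
  have slice : Continuous fun t : ℝ => (p.1, p.2.1, t) := by fun_prop
  exact EventuallyEq.deriv_eq ((slice.tendsto p.2.2).eventually h)

theorem pdx_eventuallyEq_fderiv {n : ℕ} (hf : ContDiffAt ℝ (n + 1) f p) :
    pdx f =ᶠ[𝓝 p] fun q => fderiv ℝ f q (1, 0, 0) := by
  filter_upwards [hf.eventually (by simp)] with q hq
  exact pdx_eq_fderiv (hq.differentiableAt (by simp))

theorem pdy_eventuallyEq_fderiv {n : ℕ} (hf : ContDiffAt ℝ (n + 1) f p) :
    pdy f =ᶠ[𝓝 p] fun q => fderiv ℝ f q (0, 1, 0) := by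
  filter_upwards [hf.eventually (by simp)] with q hq
  exact pdy_eq_fderiv (hq.differentiableAt (by simp))

theorem contDiffAt_pdx {n : ℕ} (hf : ContDiffAt ℝ (n + 1) f p) : ContDiffAt ℝ n (pdx f) p :=
  (hf.fderiv_right_succ.clm_apply contDiffAt_const).congr_of_eventuallyEq
    (pdx_eventuallyEq_fderiv hf)

theorem contDiffAt_pdy {n : ℕ} (hf : ContDiffAt ℝ (n + 1) f p) : ContDiffAt ℝ n (pdy f) p :=
  (hf.fderiv_right_succ.clm_apply contDiffAt_const).congr_of_eventuallyEq
    (pdy_eventuallyEq_fderiv hf)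

theorem pdx_pdy_comm (hf : ContDiffAt ℝ 2 f p) : pdx (pdy f) p = pdy (pdx f) p := by
  have hf' : ContDiffAt ℝ ((1 : ℕ) + 1) f p := by simpa [one_add_one_eq_two] using hf
  have hdf : DifferentiableAt ℝ (fderiv ℝ f) p :=
    hf'.fderiv_right_succ.differentiableAt (by simp)
  have hsymm : IsSymmSndFDerivAt ℝ f p := hf.isSymmSndFDerivAt (by simp)
  rw [pdx_congr (pdy_eventuallyEq_fderiv hf'), pdy_congr (pdx_eventuallyEq_fderiv hf'),
    pdx_eq_fderiv (hdf.clm_apply (differentiableAt_const _)),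
    pdy_eq_fderiv (hdf.clm_apply (differentiableAt_const _)),
    fderiv_clm_apply hdf (differentiableAt_const _),
    fderiv_clm_apply hdf (differentiableAt_const _)]
  simpa using hsymm (1, 0, 0) (0, 1, 0)

theorem pdx_eq_zero_of_even (hf : ∀ x y z, f (-x, y, z) = f (x, y, z)) (hp : p.1 = 0) :
    pdx f p = 0 := by
  have h := deriv_comp_neg (fun t => f (t, p.2.1, p.2.2)) 0
  simp only [hf, neg_zero] at h
  rw [pdx, hp]
  linarith

theorem pdy_eq_zero_of_even (hf : ∀ x y z, f (x, -y, z) = f (x, y, z)) (hp : p.2.1 = 0) :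
    pdy f p = 0 := by
  have h := deriv_comp_neg (fun t => f (p.1, t, p.2.2)) 0
  simp only [hf, neg_zero] at h
  rw [pdy, hp]
  linarith

theorem fderiv_self_of_homogeneous {E F : Type*} [NormedAddCommGroup E] [NormedSpace ℝ E]
    [NormedAddCommGroup F] [NormedSpace ℝ F] {u : E → F} {x : E} {n : ℤ}
    (hu : DifferentiableAt ℝ u x) (hom : ∀ t : ℝ, 0 < t → u (t • x) = t ^ n • u x) :
    fderiv ℝ u x x = (n : ℝ) • u x := by
  have along_ray : HasDerivAt (fun t : ℝ => u (t • x)) (fderiv ℝ u x x) 1 := by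
    have ray : HasDerivAt (fun t : ℝ => t • x) x 1 := by
      simpa using (hasDerivAt_id (1 : ℝ)).smul_const x
    exact HasFDerivAt.comp_hasDerivAt (1 : ℝ) (by simpa using hu.hasFDerivAt) ray
  have power : HasDerivAt (fun t : ℝ => t ^ n • u x) ((n : ℝ) • u x) 1 := by
    simpa using (hasDerivAt_zpow n (1 : ℝ) (by simp)).smul_const (u x)
  refine along_ray.unique (power.congr_of_eventuallyEq ?_)
  filter_upwards [lt_mem_nhds one_pos] with t ht using hom t ht

/-- The row-wise divergence `∑ⱼ ∂σ_ij/∂x_j` of a tensor field on `ℝ³`. -/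
def tensorDiv (σ : ℝ × ℝ × ℝ → Matrix (Fin 3) (Fin 3) ℝ) (p : ℝ × ℝ × ℝ) (i : Fin 3) : ℝ :=
  pdx (fun q => σ q i 0) p + pdy (fun q => σ q i 1) p + pdz (fun q => σ q i 2) p

section tensorDiv

variable {σ τ : ℝ × ℝ × ℝ → Matrix (Fin 3) (Fin 3) ℝ} {i : Fin 3}

theorem tensorDiv_congr_row (h : ∀ᶠ q in 𝓝 p, σ q i = τ q i) :
    tensorDiv σ p i = tensorDiv τ p i := by
  have entry (j : Fin 3) : (fun q => σ q i j) =ᶠ[𝓝 p] fun q => τ q i j :=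
    h.mono fun _ hq => congrFun hq j
  rw [tensorDiv, tensorDiv, pdx_congr (entry 0), pdy_congr (entry 1), pdz_congr (entry 2)]

theorem tensorDiv_eq_fderiv (hσ : ∀ j, DifferentiableAt ℝ (fun q => σ q i j) p) :
    tensorDiv σ p i = fderiv ℝ (fun q => σ q i 0) p (1, 0, 0) +
      fderiv ℝ (fun q => σ q i 1) p (0, 1, 0) + fderiv ℝ (fun q => σ q i 2) p (0, 0, 1) := by
  rw [tensorDiv, pdx_eq_fderiv (hσ 0), pdy_eq_fderiv (hσ 1), pdz_eq_fderiv (hσ 2)]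

theorem tensorDiv_add (hσ : ∀ j, DifferentiableAt ℝ (fun q => σ q i j) p)
    (hτ : ∀ j, DifferentiableAt ℝ (fun q => τ q i j) p) :
    tensorDiv (fun q => σ q + τ q) p i = tensorDiv σ p i + tensorDiv τ p i := by
  rw [tensorDiv_eq_fderiv fun j => (hσ j).add (hτ j), tensorDiv_eq_fderiv hσ,
    tensorDiv_eq_fderiv hτ]
  simp only [Matrix.add_apply, fderiv_fun_add (hσ _) (hτ _), _root_.add_apply]
  ring

theorem tensorDiv_const_smul (c : ℝ) : tensorDiv (fun q => c • σ q) p i = c * tensorDiv σ p i := by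
  simp only [tensorDiv, pdx, pdy, pdz, Matrix.smul_apply, smul_eq_mul, deriv_const_mul_field,
    mul_add]

end tensorDiv

/-- The position vector of a point of `ℝ³`, as a column indexed by `Fin 3`. -/
def position (q : ℝ × ℝ × ℝ) : Fin 3 → ℝ := ![q.1, q.2.1, q.2.2]

@[fun_prop]
theorem differentiableAt_position (j : Fin 3) : DifferentiableAt ℝ (fun q => position q j) p := by
  fin_cases j
  · exact differentiableAt_fst
  · exact differentiableAt_snd.fst
  · exact differentiableAt_snd.snd

theorem tensorDiv_vecMulVec_position {v : ℝ × ℝ × ℝ → Fin 3 → ℝ} {i : Fin 3}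
    (hv : DifferentiableAt ℝ (fun q => v q i) p) :
    tensorDiv (fun q => vecMulVec (v q) (position q)) p i =
      fderiv ℝ (fun q => v q i) p p + 3 * v p i := by
  have split : p = p.1 • (1, 0, 0) + p.2.1 • (0, 1, 0) + p.2.2 • (0, 0, 1) := by simp
  have dx : fderiv ℝ (fun q => position q 0) p (1, 0, 0) = 1 := by
    rw [← pdx_eq_fderiv (by fun_prop)]
    exact deriv_id _
  have dy : fderiv ℝ (fun q => position q 1) p (0, 1, 0) = 1 := by
    rw [← pdy_eq_fderiv (by fun_prop)]
    exact deriv_id _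
  have dz : fderiv ℝ (fun q => position q 2) p (0, 0, 1) = 1 := by
    rw [← pdz_eq_fderiv (by fun_prop)]
    exact deriv_id _
  have fderiv_self : fderiv ℝ (fun q => v q i) p p = p.1 * fderiv ℝ (fun q => v q i) p (1, 0, 0) +
      p.2.1 * fderiv ℝ (fun q => v q i) p (0, 1, 0) +
      p.2.2 * fderiv ℝ (fun q => v q i) p (0, 0, 1) := by
    conv_lhs => enter [2]; rw [split]
    simp only [map_add, map_smul, smul_eq_mul]
  rw [tensorDiv_eq_fderiv fun j => hv.mul (differentiableAt_position j), fderiv_self]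
  simp only [vecMulVec_apply, fderiv_fun_mul hv (differentiableAt_position _), _root_.add_apply,
    _root_.smul_apply, smul_eq_mul, dx, dy, dz]
  simp only [position, cons_val]
  ring

/-- The planar stress tensor with Airy stress function `φ`, in which `z` is only a parameter.
The two off-diagonal entries differ in the order of differentiation, so that each row is
divergence-free by one exchange of derivatives. -/
def airyStress (φ : ℝ × ℝ × ℝ → ℝ) (q : ℝ × ℝ × ℝ) : Matrix (Fin 3) (Fin 3) ℝ :=
  !![pdy (pdy φ) q, -pdx (pdy φ) q, 0; -pdy (pdx φ) q, pdx (pdx φ) q, 0; 0, 0, 0]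

theorem differentiableAt_airyStress {φ : ℝ × ℝ × ℝ → ℝ} (hφ : ContDiffAt ℝ 3 φ p) (i j : Fin 3) :
    DifferentiableAt ℝ (fun q => airyStress φ q i j) p := by
  have hφ' : ContDiffAt ℝ ((1 + 1 : ℕ) + 1) φ p := by convert hφ; norm_num
  have hx := contDiffAt_pdx hφ'
  have hy := contDiffAt_pdy hφ'
  have hxx := (contDiffAt_pdx hx).differentiableAt (by simp)
  have hyx := (contDiffAt_pdy hx).differentiableAt (by simp)
  have hxy := (contDiffAt_pdx hy).differentiableAt (by simp)
  have hyy := (contDiffAt_pdy hy).differentiableAt (by simp)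
  have h0 : DifferentiableAt ℝ (fun _ => 0 : ℝ × ℝ × ℝ → ℝ) p := differentiableAt_const 0
  fin_cases i <;> fin_cases j
  exacts [hyy, hxy.neg, h0, hyx.neg, hxx, h0, h0, h0, h0]

theorem tensorDiv_airyStress {φ : ℝ × ℝ × ℝ → ℝ} (hφ : ContDiffAt ℝ 3 φ p) (i : Fin 3) :
    tensorDiv (airyStress φ) p i = 0 := by
  have hφ' : ContDiffAt ℝ ((2 : ℕ) + 1) φ p := by convert hφ; norm_num
  have row_x : tensorDiv (airyStress φ) p 0 = pdx (pdy (pdy φ)) p - pdy (pdx (pdy φ)) p := by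
    simp [tensorDiv, airyStress, pdx, pdy, pdz, sub_eq_add_neg]
  have row_y : tensorDiv (airyStress φ) p 1 = pdy (pdx (pdx φ)) p - pdx (pdy (pdx φ)) p := by
    simp [tensorDiv, airyStress, pdx, pdy, pdz, sub_eq_add_neg, add_comm]
  have row_z : tensorDiv (airyStress φ) p 2 = 0 := by
    simp [tensorDiv, airyStress, pdx, pdy, pdz]
  fin_cases i
  · exact row_x.trans (sub_eq_zero.2 (pdx_pdy_comm (contDiffAt_pdy hφ')))
  · exact row_y.trans (sub_eq_zero.2 (pdx_pdy_comm (contDiffAt_pdx hφ')).symm)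
  · exact row_z

/-- The distance `R` of a point to the origin; the norm of `ℝ × ℝ × ℝ` is the sup norm. -/
def radius (q : ℝ × ℝ × ℝ) : ℝ := √(q.1 ^ 2 + q.2.1 ^ 2 + q.2.2 ^ 2)

theorem sq_radius (q : ℝ × ℝ × ℝ) : radius q ^ 2 = q.1 ^ 2 + q.2.1 ^ 2 + q.2.2 ^ 2 :=
  Real.sq_sqrt (by positivity)

theorem radius_nonneg (q : ℝ × ℝ × ℝ) : 0 ≤ radius q := Real.sqrt_nonneg _

theorem radius_pos (hp : p ≠ 0) : 0 < radius p := by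
  contrapose! hp
  have : p.1 ^ 2 + p.2.1 ^ 2 + p.2.2 ^ 2 ≤ 0 :=
    Real.sqrt_eq_zero'.1 (hp.antisymm (radius_nonneg p))
  ext <;> simp only [Prod.fst_zero, Prod.snd_zero] <;> nlinarith

theorem radius_smul {t : ℝ} (ht : 0 ≤ t) (q : ℝ × ℝ × ℝ) : radius (t • q) = t * radius q := by
  rw [radius, radius, ← Real.sqrt_sq ht, ← Real.sqrt_mul (sq_nonneg t), Real.sqrt_sq ht]
  congr 1
  simp only [Prod.smul_fst, Prod.smul_snd, smul_eq_mul]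
  ring

theorem contDiffAt_radius {n : ℕ} (hp : p ≠ 0) : ContDiffAt ℝ n radius p := by
  refine ContDiffAt.sqrt (by fun_prop) ?_
  rw [← sq_radius]
  exact (pow_pos (radius_pos hp) 2).ne'

/-- The vector field `-3 z R⁻⁵ (x, y, z)`; its tensor product with the position vector is the
Boussinesq stress for `ν = 1/2` and `P = 2π`. -/
def radialField (q : ℝ × ℝ × ℝ) : Fin 3 → ℝ := (-3 * q.2.2 / radius q ^ 5) • position q

theorem differentiableAt_radialField (hp : p ≠ 0) (i : Fin 3) :
    DifferentiableAt ℝ (fun q => radialField q i) p := by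
  have hR : DifferentiableAt ℝ radius p :=
    (contDiffAt_radius (n := 1) hp).differentiableAt (by simp)
  have hR0 : radius p ^ 5 ≠ 0 := (pow_pos (radius_pos hp) 5).ne'
  simp only [radialField, Pi.smul_apply, smul_eq_mul]
  fun_prop (disch := assumption)

theorem radialField_smul {t : ℝ} (ht : 0 < t) (q : ℝ × ℝ × ℝ) :
    radialField (t • q) = t ^ (-3 : ℤ) • radialField q := by
  have hpos : position (t • q) = t • position q := by simp [position]
  rw [radialField, radialField, hpos, radius_smul ht.le, smul_smul, smul_smul]
  congr 1
  have hpow : t ^ (-3 : ℤ) = (t ^ 3)⁻¹ := by rw [_root_.zpow_neg]; norm_cast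
  simp only [Prod.smul_snd, smul_eq_mul, hpow]
  field_simp

theorem tensorDiv_vecMulVec_radialField (hp : p ≠ 0) (i : Fin 3) :
    tensorDiv (fun q => vecMulVec (radialField q) (position q)) p i = 0 := by
  have hv := differentiableAt_radialField hp i
  have euler := fderiv_self_of_homogeneous (n := -3) hv fun t ht => by
    simpa using congrFun (radialField_smul ht p) i
  rw [tensorDiv_vecMulVec_position hv, euler, smul_eq_mul]
  push_cast
  ring

theorem hasDerivAt_radius_x (hp : p ≠ 0) :
    HasDerivAt (fun t => radius (t, p.2)) (p.1 / radius p) p.1 := by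
  have h : HasDerivAt (fun t => t ^ 2 + p.2.1 ^ 2 + p.2.2 ^ 2) (2 * p.1) p.1 := by
    simpa using ((hasDerivAt_pow 2 p.1).add_const (p.2.1 ^ 2)).add_const (p.2.2 ^ 2)
  have h0 : p.1 ^ 2 + p.2.1 ^ 2 + p.2.2 ^ 2 ≠ 0 := sq_radius p ▸ (pow_pos (radius_pos hp) 2).ne'
  exact (h.sqrt h0).congr_deriv (mul_div_mul_left _ _ two_ne_zero)

theorem hasDerivAt_radius_y (hp : p ≠ 0) :
    HasDerivAt (fun t => radius (p.1, t, p.2.2)) (p.2.1 / radius p) p.2.1 := by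
  have h : HasDerivAt (fun t => p.1 ^ 2 + t ^ 2 + p.2.2 ^ 2) (2 * p.2.1) p.2.1 := by
    simpa using ((hasDerivAt_pow 2 p.2.1).const_add (p.1 ^ 2)).add_const (p.2.2 ^ 2)
  have h0 : p.1 ^ 2 + p.2.1 ^ 2 + p.2.2 ^ 2 ≠ 0 := sq_radius p ▸ (pow_pos (radius_pos hp) 2).ne'
  exact (h.sqrt h0).congr_deriv (mul_div_mul_left _ _ two_ne_zero)

/-- Boussinesq's logarithmic potential `log (z + R)`. -/
def logPotential (q : ℝ × ℝ × ℝ) : ℝ := Real.log (q.2.2 + radius q)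

theorem height_add_radius_pos (hp : p.1 ^ 2 + p.2.1 ^ 2 ≠ 0) : 0 < p.2.2 + radius p := by
  have hr : 0 < p.1 ^ 2 + p.2.1 ^ 2 := by positivity
  have : |p.2.2| < radius p := abs_lt_of_sq_lt_sq (by linarith [sq_radius p]) (radius_nonneg p)
  linarith [neg_abs_le p.2.2]

theorem ne_zero_of_height_add_radius_pos (hp : 0 < p.2.2 + radius p) : p ≠ 0 := by
  rintro rfl
  simp [radius] at hp

theorem eventually_height_add_radius_pos (hp : 0 < p.2.2 + radius p) :
    ∀ᶠ q in 𝓝 p, 0 < q.2.2 + radius q := by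
  have hcont : Continuous fun q : ℝ × ℝ × ℝ => q.2.2 + radius q := by
    unfold radius
    fun_prop
  exact hcont.continuousAt.eventually (lt_mem_nhds hp)

theorem contDiffAt_logPotential {n : ℕ} (hp : 0 < p.2.2 + radius p) :
    ContDiffAt ℝ n logPotential p :=
  (contDiffAt_snd.snd.add (contDiffAt_radius (ne_zero_of_height_add_radius_pos hp))).log hp.ne'

section Slices

variable {R u : ℝ → ℝ} {u' t w z : ℝ}

theorem hasDerivAt_log_const_add (hR : HasDerivAt R (w / R t) t) (hz : z + R t ≠ 0) :
    HasDerivAt (fun s => Real.log (z + R s)) (w / (R t * (z + R t))) t :=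
  ((hR.const_add z).log hz).congr_deriv (div_div _ _ _)

theorem hasDerivAt_div_mul_const_add (hR : HasDerivAt R (w / R t) t) (hu : HasDerivAt u u' t)
    (hRt : R t ≠ 0) (hz : z + R t ≠ 0) :
    HasDerivAt (fun s => u s / (R s * (z + R s)))
      (u' / (R t * (z + R t)) - u t * w * ((z + 2 * R t) / (R t ^ 3 * (z + R t) ^ 2))) t := by
  refine (hu.fun_div (hR.fun_mul (hR.const_add z)) (mul_ne_zero hRt hz)).congr_deriv ?_
  field_simp
  ring

end Slices

theorem pdx_logPotential (hp : 0 < p.2.2 + radius p) :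
    pdx logPotential p = p.1 / (radius p * (p.2.2 + radius p)) := by
  have hR := hasDerivAt_radius_x (ne_zero_of_height_add_radius_pos hp)
  exact (hasDerivAt_log_const_add hR hp.ne').deriv

theorem pdy_logPotential (hp : 0 < p.2.2 + radius p) :
    pdy logPotential p = p.2.1 / (radius p * (p.2.2 + radius p)) := by
  have hR := hasDerivAt_radius_y (ne_zero_of_height_add_radius_pos hp)
  exact (hasDerivAt_log_const_add hR hp.ne').deriv

theorem airyStress_logPotential (hp : 0 < p.2.2 + radius p) :
    airyStress logPotential p =
      (1 / (radius p * (p.2.2 + radius p))) • !![1, 0, 0; 0, 1, 0; 0, 0, 0] -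
      ((p.2.2 + 2 * radius p) / (radius p ^ 3 * (p.2.2 + radius p) ^ 2)) •
        vecMulVec ![-p.2.1, p.1, 0] ![-p.2.1, p.1, 0] := by
  have hp0 := ne_zero_of_height_add_radius_pos hp
  have hR := (radius_pos hp0).ne'
  have hx : pdx logPotential =ᶠ[𝓝 p] fun q => q.1 / (radius q * (q.2.2 + radius q)) :=
    (eventually_height_add_radius_pos hp).mono fun _ => pdx_logPotential
  have hy : pdy logPotential =ᶠ[𝓝 p] fun q => q.2.1 / (radius q * (q.2.2 + radius q)) :=
    (eventually_height_add_radius_pos hp).mono fun _ => pdy_logPotential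
  have hRx := hasDerivAt_radius_x hp0
  have hRy := hasDerivAt_radius_y hp0
  have hxx := (pdx_congr hx).trans
    (hasDerivAt_div_mul_const_add hRx (hasDerivAt_id _) hR hp.ne').deriv
  have hyx := (pdy_congr hx).trans
    (hasDerivAt_div_mul_const_add hRy (hasDerivAt_const _ p.1) hR hp.ne').deriv
  have hxy := (pdx_congr hy).trans
    (hasDerivAt_div_mul_const_add hRx (hasDerivAt_const _ p.2.1) hR hp.ne').deriv
  have hyy := (pdy_congr hy).trans
    (hasDerivAt_div_mul_const_add hRy (hasDerivAt_id _) hR hp.ne').deriv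
  rw [airyStress, hxx, hyx, hxy, hyy]
  ext i j
  fin_cases i <;> fin_cases j <;> simp <;> ring

theorem hoop_factor_eq {r z R : ℝ} (hR : R ≠ 0) (hz : z + R ≠ 0) (hr : r ^ 2 + z ^ 2 = R ^ 2) :
    z / R ^ 3 - 1 / (R * (z + R)) =
      1 / (R * (z + R)) - r ^ 2 * ((z + 2 * R) / (R ^ 3 * (z + R) ^ 2)) := by
  rw [eq_sub_of_add_eq hr]
  field_simp
  ring

theorem vecMulVec_polar_frame {x y r : ℝ} (hr : r ≠ 0) (hxy : r ^ 2 = x ^ 2 + y ^ 2) :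
    vecMulVec ![x / r, y / r, 0] ![x / r, y / r, 0] +
      vecMulVec ![-y / r, x / r, 0] ![-y / r, x / r, 0] = !![1, 0, 0; 0, 1, 0; 0, 0, 0] := by
  ext i j
  fin_cases i <;> fin_cases j <;> simp <;> field_simp <;> linarith

theorem position_eq_polar (q : ℝ × ℝ × ℝ) :
    position q = √(q.1 ^ 2 + q.2.1 ^ 2) •
      ![q.1 / √(q.1 ^ 2 + q.2.1 ^ 2), q.2.1 / √(q.1 ^ 2 + q.2.1 ^ 2), 0] + q.2.2 • ![0, 0, 1] := by
  have hx : √(q.1 ^ 2 + q.2.1 ^ 2) * (q.1 / √(q.1 ^ 2 + q.2.1 ^ 2)) = q.1 :=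
    mul_div_cancel_of_imp' fun h => by nlinarith [Real.sqrt_eq_zero'.1 h]
  have hy : √(q.1 ^ 2 + q.2.1 ^ 2) * (q.2.1 / √(q.1 ^ 2 + q.2.1 ^ 2)) = q.2.1 :=
    mul_div_cancel_of_imp' fun h => by nlinarith [Real.sqrt_eq_zero'.1 h]
  simp [position, hx, hy]

theorem bstress_eq_of_off_axis (P ν : ℝ) (hp : p.1 ^ 2 + p.2.1 ^ 2 ≠ 0) :
    bstress P ν p = (P / (2 * Real.pi)) • (vecMulVec (radialField p) (position p) +
      (1 - 2 * ν) • airyStress logPotential p) := by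
  have hz := height_add_radius_pos hp
  have hR := (radius_pos (ne_zero_of_height_add_radius_pos hz)).ne'
  have hr : √(p.1 ^ 2 + p.2.1 ^ 2) ^ 2 = p.1 ^ 2 + p.2.1 ^ 2 := Real.sq_sqrt (by positivity)
  have hr0 : √(p.1 ^ 2 + p.2.1 ^ 2) ≠ 0 := by positivity
  have hoop := hoop_factor_eq hR hz.ne' (by rw [hr, sq_radius])
  rw [airyStress_logPotential hz]
  simp only [bstress, radialField]
  rw [← radius.eq_1, mul_div_right_comm, hoop, position_eq_polar]
  generalize √(p.1 ^ 2 + p.2.1 ^ 2) = r at *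
  have angular_eq : ![-p.2.1, p.1, 0] = r • ![-p.2.1 / r, p.1 / r, 0] := by
    simp [mul_div_cancel₀ _ hr0]
  rw [angular_eq, ← vecMulVec_polar_frame hr0 hr]
  ext i j
  simp only [Matrix.add_apply, Matrix.sub_apply, Matrix.smul_apply, vecMulVec_apply, Pi.add_apply,
    Pi.smul_apply, smul_eq_mul]
  ring

theorem bstress_row_two_eq (P ν : ℝ) (q : ℝ × ℝ × ℝ) :
    bstress P ν q 2 = ((P / (2 * Real.pi)) • vecMulVec (radialField q) (position q)) 2 := by
  ext j
  rw [Matrix.smul_apply, vecMulVec_apply, radialField, position_eq_polar]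
  simp only [bstress, ← radius.eq_1, Matrix.add_apply, Matrix.smul_apply, vecMulVec_apply,
    Pi.add_apply, Pi.smul_apply, smul_eq_mul, cons_val]
  ring

-- On the `z`-axis `x / 0 = 0` makes `e_r` and `e_θ` vanish, so that the entries `(0, 0)` and
-- `(1, 1)` of `bstress` jump there; parity takes the place of the decomposition in rows 0 and 1.
theorem tensorDiv_bstress_zero_of_fst_eq_zero (P ν : ℝ) (hp : p.1 = 0) :
    tensorDiv (bstress P ν) p 0 = 0 := by
  have hx : pdx (fun q => bstress P ν q 0 0) p = 0 :=
    pdx_eq_zero_of_even (fun x y z => by simp [bstress, neg_div]) hp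
  rw [tensorDiv, hx]
  simp [pdy, pdz, bstress, hp]

theorem tensorDiv_bstress_one_of_snd_eq_zero (P ν : ℝ) (hp : p.2.1 = 0) :
    tensorDiv (bstress P ν) p 1 = 0 := by
  have hy : pdy (fun q => bstress P ν q 1 1) p = 0 :=
    pdy_eq_zero_of_even (fun x y z => by simp [bstress, neg_div]) hp
  rw [tensorDiv, hy]
  simp [pdx, pdz, bstress, hp]

theorem tensorDiv_bstress_two (P ν : ℝ) (hp : p ≠ 0) : tensorDiv (bstress P ν) p 2 = 0 := by
  rw [tensorDiv_congr_row (.of_forall (bstress_row_two_eq P ν)), tensorDiv_const_smul,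
    tensorDiv_vecMulVec_radialField hp, mul_zero]

theorem tensorDiv_bstress_of_off_axis (P ν : ℝ) (hp : p.1 ^ 2 + p.2.1 ^ 2 ≠ 0) (i : Fin 3) :
    tensorDiv (bstress P ν) p i = 0 := by
  have hp0 : p ≠ 0 := ne_zero_of_height_add_radius_pos (height_add_radius_pos hp)
  have hφ := contDiffAt_logPotential (n := 3) (height_add_radius_pos hp)
  have near : ∀ᶠ q : ℝ × ℝ × ℝ in 𝓝 p, q.1 ^ 2 + q.2.1 ^ 2 ≠ 0 :=
    ContinuousAt.eventually_ne (by fun_prop) hp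
  have decomp := near.mono fun q hq => congrFun (bstress_eq_of_off_axis P ν hq) i
  rw [tensorDiv_congr_row decomp, tensorDiv_const_smul, tensorDiv_add
    (fun j => (differentiableAt_radialField hp0 i).mul (differentiableAt_position j))
    (fun j => (differentiableAt_airyStress hφ i j).const_mul _), tensorDiv_const_smul,
    tensorDiv_vecMulVec_radialField hp0, tensorDiv_airyStress hφ, mul_zero, add_zero, mul_zero]

-- The excluded half-line `x = y = 0`, `z ≤ 0` is where `z + R = 0` and the stress is singular.
theorem boussinesq_stress_equilibrium_general (P ν : ℝ) (p : ℝ × ℝ × ℝ)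
    (hp : p.1 ^ 2 + p.2.1 ^ 2 ≠ 0 ∨ 0 < p.2.2) (i : Fin 3) :
    tensorDiv (bstress P ν) p i = 0 := by
  by_cases axis : p.1 ^ 2 + p.2.1 ^ 2 = 0
  · have hz : 0 < p.2.2 := hp.resolve_left (not_not.2 axis)
    have hx : p.1 = 0 := by nlinarith
    have hy : p.2.1 = 0 := by nlinarith
    fin_cases i
    · exact tensorDiv_bstress_zero_of_fst_eq_zero P ν hx
    · exact tensorDiv_bstress_one_of_snd_eq_zero P ν hy
    · exact tensorDiv_bstress_two P ν fun h => by simp [h] at hz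
  · exact tensorDiv_bstress_of_off_axis P ν axis i

/-- At every point of the open half-space `{z > 0} \ {0}`, the Cartesian Boussinesq stress
tensor satisfies the equilibrium equations `div σ = 0`:
for each row `i`, `∑ⱼ ∂σ_ij/∂x_j = 0`. -/
theorem boussinesq_stress_equilibrium
    (P ν : ℝ) (p : ℝ × ℝ × ℝ) (hz : 0 < p.2.2) (hp : p ≠ (0, 0, 0)) :
    ∀ i : Fin 3,
      pdx (fun q => bstress P ν q i 0) p +
      pdy (fun q => bstress P ν q i 1) p +
      pdz (fun q => bstress P ν q i 2) p = 0 :=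
  boussinesq_stress_equilibrium_general P ν p (.inr hz)
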